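/- arXiv:1906.09800 — 2 statements merged into one kernel-verified Lean document; each statement's English description precedes it below -/
import Mathlib

section
/- Let κ : [ℓ₀,∞) → (0,∞) be continuous with ∫_{ℓ₀}^{∞} κ(σ)dσ = ∞ (condition (K0)). Then for every T > 0 and M > 0 there exists L > 0 such that for every ε ∈ (0,1/2) and every pair (u,ℓ) as in the uniform energy bound (classical solution with the energy-dissipation balance for this κ, E(0) ≤ M and ∫₀ᵀ ẇ² ≤ M), one has ℓ(T) ≤ L. -/
/-!
Write `G = ε² u_t² + u_x²` and `e(t) = ½ ∫₀^{l0} G(t,x) dx`, the energy in the part `[0, l0]` of the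
string that is present at all times, so `e ≤ E`. The energy-dissipation balance bounds
`E(t) + ∫ κ` by `M - W(t) ≤ M + ½ ∫ ẇ² + ½ ∫ u_x(τ,0)² dτ`, so everything rests on controlling the
boundary term `∫₀ᵗ u_x(τ,0)² dτ`.

This is done in `flux` by multiplying the wave equation by `φ u_x` with `φ(x) = 1 - x / l0`: since
`∂_t (φ ε² u_t u_x) - ∂_x (½ φ G) = -ν ε φ u_t u_x + G / (2 l0)`, the divergence theorem on
`[0,t] × [0,l0]`, where `φ` kills the right boundary, gives
`½ ∫₀ᵗ u_x(τ,0)² dτ ≤ (ν + 1/l0) ∫₀ᵗ e + ε e(t) + ε e(0)`.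
As `ε < 1/2`, the term `ε e(t)` is absorbed in the left-hand side, and
`e(t) ≤ 4 M + 2 (ν + 1/l0) ∫₀ᵗ e`. Grönwall's inequality (`gronwall_int`) then bounds `∫₀ᵀ e`, hence
`∫_{l0}^{ℓ(T)} κ`, independently of `ε`, and `ℓ(T)` is bounded because `κ` is positive and not
integrable (`exists_toughness`). Since `e` involves only the fixed interval `[0, l0]`, its
continuity is immediate and the time regularity of `E` plays no role.
-/

open MeasureTheory Set

/-- Partial derivative in time. -/
noncomputable def pt (u : ℝ → ℝ → ℝ) (t x : ℝ) : ℝ := deriv (fun s => u s x) t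

/-- Partial derivative in space. -/
noncomputable def px (u : ℝ → ℝ → ℝ) (t x : ℝ) : ℝ := deriv (fun y => u t y) x

/-- Second partial derivative in time. -/
noncomputable def ptt (u : ℝ → ℝ → ℝ) (t x : ℝ) : ℝ := deriv (fun s => pt u s x) t

/-- Second partial derivative in space. -/
noncomputable def pxx (u : ℝ → ℝ → ℝ) (t x : ℝ) : ℝ := deriv (fun y => px u t y) x

/-- Kinetic plus potential energy `E(t)`. -/
noncomputable def En (ε : ℝ) (ℓ : ℝ → ℝ) (u : ℝ → ℝ → ℝ) (t : ℝ) : ℝ :=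
  (1/2) * ∫ σ in (0:ℝ)..ℓ t, (ε ^ 2 * (pt u t σ) ^ 2 + (px u t σ) ^ 2)

/-- Energy dissipated by friction `A(t)`. -/
noncomputable def Afr (ε ν : ℝ) (ℓ : ℝ → ℝ) (u : ℝ → ℝ → ℝ) (t : ℝ) : ℝ :=
  ν * ∫ τ in (0:ℝ)..t, ∫ σ in (0:ℝ)..ℓ τ, ε * (pt u τ σ) ^ 2

/-- Work of the external loading `W(t)` (with `ẇ(τ) = u_t(τ,0)`). -/
noncomputable def Wk (u : ℝ → ℝ → ℝ) (t : ℝ) : ℝ :=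
  ∫ τ in (0:ℝ)..t, pt u τ 0 * px u τ 0

/-- An integral over a fixed interval of a function continuous on a compact rectangle depends
continuously on the parameter. The function is precomposed with the projection onto the rectangle
to make it continuous everywhere. -/
lemma slice_cont {h : ℝ × ℝ → ℝ} {t l : ℝ} (ht : 0 ≤ t) (hl : 0 ≤ l)
    (hh : ContinuousOn h (Icc 0 t ×ˢ Icc 0 l)) :
    ContinuousOn (fun s => ∫ y in (0:ℝ)..l, h (s, y)) (Icc 0 t) := by
  have hc : Continuous (fun s => ∫ y in (0:ℝ)..l,
      h ((projIcc 0 t ht s : ℝ), (projIcc 0 l hl y : ℝ))) := by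
    apply intervalIntegral.continuous_parametric_intervalIntegral_of_continuous' (a₀ := 0)
    have h1 : Continuous fun p : ℝ × ℝ => (((projIcc 0 t ht p.1 : ℝ), (projIcc 0 l hl p.2 : ℝ)) : ℝ × ℝ) := by
      have := continuous_projIcc (h := ht)
      have := continuous_projIcc (h := hl)
      fun_prop
    exact hh.comp_continuous h1 fun p => ⟨(projIcc 0 t ht p.1).2, (projIcc 0 l hl p.2).2⟩
  refine hc.continuousOn.congr fun s hs => ?_
  apply intervalIntegral.integral_congr
  intro y hy
  rw [uIcc_of_le hl] at hy
  simp [projIcc_of_mem ht hs, projIcc_of_mem hl hy]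

lemma hasDerivAt_fst_slice {F : ℝ × ℝ → ℝ} {t x : ℝ} (hF : DifferentiableAt ℝ F (t, x)) :
    HasDerivAt (fun s => F (s, x)) (fderiv ℝ F (t, x) (1, 0)) t :=
  hF.hasFDerivAt.comp_hasDerivAt t ((hasDerivAt_id t).prodMk (hasDerivAt_const t x))

lemma hasDerivAt_snd_slice {F : ℝ × ℝ → ℝ} {t x : ℝ} (hF : DifferentiableAt ℝ F (t, x)) :
    HasDerivAt (fun y => F (t, y)) (fderiv ℝ F (t, x) (0, 1)) x :=
  hF.hasFDerivAt.comp_hasDerivAt x ((hasDerivAt_const x t).prodMk (hasDerivAt_id x))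

/-- Grönwall's inequality in integral form, for the primitive of a nonnegative function. -/
lemma gronwall_int {e : ℝ → ℝ} {T a b : ℝ} (hT : 0 ≤ T) (he : ContinuousOn e (Icc 0 T))
    (he0 : ∀ t ∈ Icc 0 T, 0 ≤ e t)
    (hb : ∀ t ∈ Icc 0 T, e t ≤ a + b * ∫ s in (0:ℝ)..t, e s) :
    ∫ s in (0:ℝ)..T, e s ≤ gronwallBound 0 b a T := by
  have hc : Continuous fun s => e (projIcc 0 T hT s) := 
    he.comp_continuous (continuous_subtype_val.comp continuous_projIcc) fun p => (projIcc 0 T hT p).2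
  have hI : ∀ t ∈ Icc 0 T, ∫ s in (0:ℝ)..t, e (projIcc 0 T hT s) = ∫ s in (0:ℝ)..t, e s := by
    intro t ht
    apply intervalIntegral.integral_congr
    intro y hy
    rw [uIcc_of_le ht.1] at hy
    simp [projIcc_of_mem hT ⟨hy.1, hy.2.trans ht.2⟩]
  have hn : ∀ t ∈ Icc 0 T, 0 ≤ ∫ s in (0:ℝ)..t, e s := fun t ht =>
    intervalIntegral.integral_nonneg ht.1 fun s hs => he0 s ⟨hs.1, hs.2.trans ht.2⟩
  have hd : ∀ t, HasDerivAt (fun t => ∫ s in (0:ℝ)..t, e (projIcc 0 T hT s)) (e (projIcc 0 T hT t)) t :=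
    fun t => intervalIntegral.integral_hasDerivAt_right (hc.intervalIntegrable _ _)
      (hc.stronglyMeasurableAtFilter _ _) hc.continuousAt
  have := norm_le_gronwallBound_of_norm_deriv_right_le (δ := 0) (K := b) (ε := a) (a := 0) (b := T)
    (fun t _ => (hd t).continuousAt.continuousWithinAt) (fun t _ => (hd t).hasDerivWithinAt)
    (by simp) (fun t ht => by
      have ht' := Ico_subset_Icc_self ht
      rw [hI t ht', projIcc_of_mem hT ht', Real.norm_of_nonneg (he0 t ht'), Real.norm_of_nonneg (hn t ht')]
      linarith [hb t ht']) T (right_mem_Icc.2 hT)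
  rw [hI T (right_mem_Icc.2 hT), Real.norm_of_nonneg (hn T (right_mem_Icc.2 hT)), sub_zero] at this
  exact this

/-- A crack of bounded dissipated energy has bounded length, since the total toughness on
`[l0, ∞)` is infinite. -/
lemma exists_toughness {κ : ℝ → ℝ} {l0 : ℝ} (hl0 : 0 < l0)
    (hκ_cont : ContinuousOn κ (Ici l0)) (hκ_pos : ∀ x ≥ l0, 0 < κ x)
    (hK0 : ¬ IntegrableOn κ (Ici l0) volume) (B : ℝ) :
    ∃ L > (0:ℝ), ∀ l ≥ l0, ∫ σ in l0..l, κ σ ≤ B → l ≤ L := by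
  have hint : ∀ c d, l0 ≤ c → l0 ≤ d → IntervalIntegrable κ volume c d := fun c d hc hd =>
    (hκ_cont.mono fun x hx => (le_inf hc hd).trans hx.1).intervalIntegrable
  by_contra! hcon
  apply hK0
  rw [integrableOn_Ici_iff_integrableOn_Ioi]
  refine integrableOn_Ioi_of_intervalIntegral_norm_bounded (ι := ℝ) (l := Filter.atTop) (b := id) B l0 (fun L => ?_) Filter.tendsto_id ?_
  · rcases le_total l0 L with h | h
    · exact (intervalIntegrable_iff_integrableOn_Ioc_of_le h).1 (hint _ _ le_rfl h)
    · simp [h]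
  · filter_upwards [Filter.eventually_ge_atTop l0] with L hL
    obtain ⟨l, hl, h1, h2⟩ := hcon L (hl0.trans_le hL)
    have e1 : ∫ x in l0..id L, ‖κ x‖ = ∫ x in l0..L, κ x := by
      apply intervalIntegral.integral_congr
      intro y hy
      rw [id_eq, uIcc_of_le hL] at hy
      exact Real.norm_of_nonneg (hκ_pos y hy.1).le
    rw [e1]
    have := intervalIntegral.integral_add_adjacent_intervals (hint _ _ le_rfl hL) (hint _ l hL hl)
    have : 0 ≤ ∫ x in L..l, κ x := intervalIntegral.integral_nonneg h2.le fun x hx => (hκ_pos x (hL.trans hx.1)).le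
    linarith

/-- Hidden regularity at the boundary `x = 0`: with `a = u_t` and `b = u_x` for a solution `u` of
the damped wave equation, the square integral of `u_x(·, 0)` is controlled by the energy in
`[0, l0]`. -/
lemma flux {l0 ν ε t : ℝ} (hl0 : 0 < l0) (hν : 0 ≤ ν) (hε : 0 < ε) (ht : 0 ≤ t)
    {U : Set (ℝ × ℝ)} (hU : IsOpen U) {a b : ℝ × ℝ → ℝ}
    (ha : ContDiffOn ℝ 1 a U) (hb : ContDiffOn ℝ 1 b U)
    (hR : Icc 0 t ×ˢ Icc 0 l0 ⊆ U)
    (hsym : ∀ p ∈ U, fderiv ℝ a p (0, 1) = fderiv ℝ b p (1, 0))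
    (hpde : ∀ s x, 0 < s → 0 < x → x < l0 →
      ε ^ 2 * fderiv ℝ a (s, x) (1, 0) - fderiv ℝ b (s, x) (0, 1) + ν * ε * a (s, x) = 0) :
    (1 / 2) * ∫ s in (0:ℝ)..t, b (s, 0) ^ 2 ≤
      (ν + 1 / l0) * (∫ s in (0:ℝ)..t,
        (1 / 2) * ∫ y in (0:ℝ)..l0, (ε ^ 2 * a (s, y) ^ 2 + b (s, y) ^ 2))
      + ε * ((1 / 2) * ∫ y in (0:ℝ)..l0, (ε ^ 2 * a (t, y) ^ 2 + b (t, y) ^ 2))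
      + ε * ((1 / 2) * ∫ y in (0:ℝ)..l0, (ε ^ 2 * a (0, y) ^ 2 + b (0, y) ^ 2)) := by
  -- The field `(f, g)` is that of the multiplier `φ u_x` with `φ(x) = 1 - x / l0`.
  set f : ℝ × ℝ → ℝ := fun p => (1 - p.2 / l0) * (ε ^ 2 * (a p * b p)) with hf
  set g : ℝ × ℝ → ℝ := fun p => -(1 / 2) * ((1 - p.2 / l0) * (ε ^ 2 * a p ^ 2 + b p ^ 2)) with hg
  have hfC : ContDiffOn ℝ 1 f U := by
    rw [hf]; fun_prop
  have hgC : ContDiffOn ℝ 1 g U := by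
    rw [hg]; fun_prop
  have hac := ha.continuousOn.mono hR
  have hbc := hb.continuousOn.mono hR
  have hfc := hfC.continuousOn.mono hR
  have hgc := hgC.continuousOn.mono hR
  have hdiff : ∀ {h : ℝ × ℝ → ℝ}, ContDiffOn ℝ 1 h U → ∀ p ∈ U, DifferentiableAt ℝ h p :=
    fun hh p hp => (hh.contDiffAt (hU.mem_nhds hp)).differentiableAt (by simp)
  have hdc : ContinuousOn (fun p => fderiv ℝ f p (1, 0) + fderiv ℝ g p (0, 1))
      (Icc 0 t ×ˢ Icc 0 l0) := by
    have h1 := (hfC.continuousOn_fderiv_of_isOpen hU le_rfl).mono hR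
    have h2 := (hgC.continuousOn_fderiv_of_isOpen hU le_rfl).mono hR
    exact (h1.clm_apply continuousOn_const).add (h2.clm_apply continuousOn_const)
  have hGc : ContinuousOn (fun p => ε ^ 2 * a p ^ 2 + b p ^ 2) (Icc 0 t ×ˢ Icc 0 l0) := by
    fun_prop
  have hsl : ∀ {h : ℝ × ℝ → ℝ}, ContinuousOn h (Icc 0 t ×ˢ Icc 0 l0) → ∀ s ∈ Icc 0 t,
      IntervalIntegrable (fun y => h (s, y)) volume 0 l0 := by
    intro h hh s hs
    apply ContinuousOn.intervalIntegrable
    rw [uIcc_of_le hl0.le]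
    exact hh.comp (by fun_prop) fun y hy => ⟨hs, hy⟩
  have hslt : ∀ {h : ℝ × ℝ → ℝ}, ContinuousOn h (Icc 0 t ×ˢ Icc 0 l0) → ∀ y ∈ Icc 0 l0,
      IntervalIntegrable (fun s => h (s, y)) volume 0 t := by
    intro h hh y hy
    apply ContinuousOn.intervalIntegrable
    rw [uIcc_of_le ht]
    exact hh.comp (by fun_prop) fun s hs => ⟨hs, hy⟩
  have houter : ∀ {h : ℝ × ℝ → ℝ}, ContinuousOn h (Icc 0 t ×ˢ Icc 0 l0) →
      IntervalIntegrable (fun s => ∫ y in (0:ℝ)..l0, h (s, y)) volume 0 t := by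
    intro h hh
    apply ContinuousOn.intervalIntegrable
    rw [uIcc_of_le ht]
    exact slice_cont ht hl0.le hh
  have hdiv := integral2_divergence_prod_of_hasFDerivAt_off_countable f g (fderiv ℝ f) (fderiv ℝ g)
    0 0 t l0 ∅ countable_empty (by rwa [uIcc_of_le ht, uIcc_of_le hl0.le])
    (by rwa [uIcc_of_le ht, uIcc_of_le hl0.le])
    (fun p hp => (hdiff hfC p (hR (by
      rw [min_eq_left ht, max_eq_right ht, min_eq_left hl0.le, max_eq_right hl0.le] at hp
      exact prod_mono Ioo_subset_Icc_self Ioo_subset_Icc_self hp.1))).hasFDerivAt)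
    (fun p hp => (hdiff hgC p (hR (by
      rw [min_eq_left ht, max_eq_right ht, min_eq_left hl0.le, max_eq_right hl0.le] at hp
      exact prod_mono Ioo_subset_Icc_self Ioo_subset_Icc_self hp.1))).hasFDerivAt)
    (by
      rw [uIcc_of_le ht, uIcc_of_le hl0.le]
      exact hdc.integrableOn_compact (isCompact_Icc.prod isCompact_Icc))
  have hval : ∀ s ∈ Ioo 0 t, ∀ y ∈ Ioo 0 l0, fderiv ℝ f (s, y) (1, 0) + fderiv ℝ g (s, y) (0, 1)
      ≤ (ν + 1 / l0) * (1 / 2) * (ε ^ 2 * a (s, y) ^ 2 + b (s, y) ^ 2) := by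
    intro s hs y hy
    have hp : (s, y) ∈ U := hR ⟨Ioo_subset_Icc_self hs, Ioo_subset_Icc_self hy⟩
    have ha1 := hasDerivAt_fst_slice (hdiff ha _ hp)
    have ha2 := hasDerivAt_snd_slice (hdiff ha _ hp)
    have hb1 := hasDerivAt_fst_slice (hdiff hb _ hp)
    have hb2 := hasDerivAt_snd_slice (hdiff hb _ hp)
    have hf1 := (hasDerivAt_fst_slice (hdiff hfC _ hp)).unique
      (((ha1.mul hb1).const_mul (ε ^ 2)).const_mul (1 - y / l0))
    have hg2 := (hasDerivAt_snd_slice (hdiff hgC _ hp)).unique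
      (((((hasDerivAt_id y).div_const l0).const_sub 1).mul
        (((ha2.pow 2).const_mul (ε ^ 2)).add (hb2.pow 2))).const_mul (-(1 / 2)))
    have hs' := hsym _ hp
    have hpde' := hpde s y hs.1 hy.1 hy.2
    set A := a (s, y)
    set B := b (s, y)
    set at' := fderiv ℝ a (s, y) (1, 0)
    set bx := fderiv ℝ b (s, y) (0, 1)
    set bt := fderiv ℝ b (s, y) (1, 0)
    have hφ0 : 0 ≤ 1 - y / l0 := by
      rw [sub_nonneg, div_le_one hl0]; exact hy.2.le
    have hφ1 : 1 - y / l0 ≤ 1 := by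
      have := div_pos hy.1 hl0; linarith
    set φ := 1 - y / l0
    have h1 : -(ε * A * B) ≤ (1 / 2) * (ε ^ 2 * A ^ 2 + B ^ 2) := by
      nlinarith [sq_nonneg (ε * A + B)]
    have h2 : 0 ≤ ε ^ 2 * A ^ 2 + B ^ 2 := by positivity
    have h3 : φ * -(ε * A * B) ≤ (1 / 2) * (ε ^ 2 * A ^ 2 + B ^ 2) :=
      (mul_le_mul_of_nonneg_left h1 hφ0).trans (mul_le_of_le_one_left (by positivity) hφ1)
    have h4 := mul_le_mul_of_nonneg_left h3 hν
    -- The second-order terms of the divergence are `φ u_x (ε² u_tt - u_xx)`, once `u_tx = u_xt`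
    -- has cancelled the mixed ones.
    have h5 : φ * B * (ε ^ 2 * at' - bx + ν * ε * A) = 0 := by rw [hpde', mul_zero]
    have hg2' : fderiv ℝ g (s, y) (0, 1) = -(1 / 2) * (-(1 / l0) * (ε ^ 2 * A ^ 2 + B ^ 2)
        + φ * (ε ^ 2 * (2 * A * bt) + 2 * B * bx)) := by
      rw [hg2, hs']
      simp [φ, A, B]
    rw [hf1, hg2']
    ring_nf at h4 h5 ⊢
    linarith
  have hle : (∫ s in (0:ℝ)..t, ∫ y in (0:ℝ)..l0,
      fderiv ℝ f (s, y) (1, 0) + fderiv ℝ g (s, y) (0, 1)) ≤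
      ∫ s in (0:ℝ)..t, (ν + 1 / l0) *
        ((1 / 2) * ∫ y in (0:ℝ)..l0, (ε ^ 2 * a (s, y) ^ 2 + b (s, y) ^ 2)) := by
    refine intervalIntegral.integral_mono_on_of_le_Ioo ht (houter hdc)
      (((houter hGc).const_mul _).const_mul _) fun s hs => ?_
    have hs' := Ioo_subset_Icc_self hs
    rw [← mul_assoc, ← intervalIntegral.integral_const_mul]
    exact intervalIntegral.integral_mono_on_of_le_Ioo hl0.le (hsl hdc s hs')
      ((hsl hGc s hs').const_mul _) (hval s hs)
  rw [intervalIntegral.integral_const_mul] at hle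
  have hg0 : ∫ s in (0:ℝ)..t, g (s, l0) = 0 := by simp [hg, hl0.ne']
  have hg1 : (1 / 2) * ∫ s in (0:ℝ)..t, b (s, 0) ^ 2 ≤ -∫ s in (0:ℝ)..t, g (s, 0) := by
    rw [← intervalIntegral.integral_neg, ← intervalIntegral.integral_const_mul]
    have h0 : (0:ℝ) ∈ Icc 0 l0 := left_mem_Icc.2 hl0.le
    refine intervalIntegral.integral_mono_on ht ((hslt (hbc.pow 2) 0 h0).const_mul _)
      (hslt hgc 0 h0).neg fun s _ => ?_
    have : 0 ≤ ε ^ 2 * a (s, 0) ^ 2 := by positivity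
    simp only [hg]
    rw [zero_div]
    linarith
  have hpt : ∀ A B φ : ℝ, 0 ≤ φ → φ ≤ 1 →
      |φ * (ε ^ 2 * (A * B))| ≤ ε * (1 / 2) * (ε ^ 2 * A ^ 2 + B ^ 2) := by
    intro A B φ h0 h1
    have h2 : |ε * A * B| ≤ (1 / 2) * (ε ^ 2 * A ^ 2 + B ^ 2) := by
      rw [abs_le]
      constructor <;> nlinarith [sq_nonneg (ε * A + B), sq_nonneg (ε * A - B)]
    rw [show φ * (ε ^ 2 * (A * B)) = φ * (ε * (ε * A * B)) by ring, abs_mul, abs_mul,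
      abs_of_nonneg h0, abs_of_pos hε, mul_assoc ε (1 / 2)]
    exact (mul_le_of_le_one_left (by positivity) h1).trans (mul_le_mul_of_nonneg_left h2 hε.le)
  have hfs : ∀ s ∈ Icc 0 t, |∫ y in (0:ℝ)..l0, f (s, y)| ≤
      ε * ((1 / 2) * ∫ y in (0:ℝ)..l0, (ε ^ 2 * a (s, y) ^ 2 + b (s, y) ^ 2)) := by
    intro s hs
    rw [← mul_assoc, ← intervalIntegral.integral_const_mul]
    refine (intervalIntegral.abs_integral_le_integral_abs hl0.le).trans
      (intervalIntegral.integral_mono_on hl0.le (hsl hfc s hs).abs ((hsl hGc s hs).const_mul _)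
        fun y hy => ?_)
    refine hpt _ _ _ ?_ ?_
    · rw [sub_nonneg, div_le_one hl0]; exact hy.2
    · have := div_nonneg hy.1 hl0.le
      simp only; linarith
  have h1 := (abs_le.1 (hfs t (right_mem_Icc.2 ht))).1
  have h2 := (abs_le.1 (hfs 0 (left_mem_Icc.2 ht))).2
  linarith

/-- The closed region `{0 ≤ t, 0 ≤ x ≤ ℓ t}` lies in the closure of the open domain: move each point
forward in time and towards the midpoint `ℓ t / 2`. -/
lemma mem_closure_domain {ℓ : ℝ → ℝ} {l0 : ℝ} (hl0 : 0 < l0) (hmono : MonotoneOn ℓ (Ici 0))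
    (hge : ∀ t ≥ (0:ℝ), l0 ≤ ℓ t) {t x : ℝ} (ht : 0 ≤ t) (hx : x ∈ Icc 0 (ℓ t)) :
    (t, x) ∈ closure {p : ℝ × ℝ | 0 < p.1 ∧ 0 < p.2 ∧ p.2 < ℓ p.1} := by
  have hc : Continuous fun θ : ℝ => ((t + θ, (1 - θ) * x + θ * (ℓ t / 2)) : ℝ × ℝ) := by fun_prop
  have hpos : 0 < ℓ t := hl0.trans_le (hge t ht)
  have h0 : (0:ℝ) ∈ closure (Ioo (0:ℝ) 1) := by
    rw [closure_Ioo (by norm_num)]; simp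
  have := map_mem_closure hc h0 (t := {p : ℝ × ℝ | 0 < p.1 ∧ 0 < p.2 ∧ p.2 < ℓ p.1}) (by
    intro θ hθ
    have h1 : 0 < θ * (ℓ t / 2) := mul_pos hθ.1 (by linarith)
    have h2 : 0 ≤ (1 - θ) * x := mul_nonneg (by linarith [hθ.2]) hx.1
    have h3 : (1 - θ) * x ≤ (1 - θ) * ℓ t := mul_le_mul_of_nonneg_left hx.2 (by linarith [hθ.2])
    have h4 : ℓ t ≤ ℓ (t + θ) := hmono ht (mem_Ici.2 (by linarith [hθ.1])) (by linarith [hθ.1])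
    refine ⟨by linarith [hθ.1], by linarith, ?_⟩
    simp only
    linarith)
  simpa using this

/-- The first partial derivatives of a `C²` function are `C¹`, and the mixed second derivatives
agree. -/
lemma partials {u : ℝ → ℝ → ℝ} {U : Set (ℝ × ℝ)} (hU : IsOpen U)
    (hu : ContDiffOn ℝ 2 (fun p : ℝ × ℝ => u p.1 p.2) U) :
    ContDiffOn ℝ 1 (fun p : ℝ × ℝ => pt u p.1 p.2) U ∧
    ContDiffOn ℝ 1 (fun p : ℝ × ℝ => px u p.1 p.2) U ∧
    ∀ p ∈ U, fderiv ℝ (fun p : ℝ × ℝ => pt u p.1 p.2) p (0, 1)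
      = fderiv ℝ (fun p : ℝ × ℝ => px u p.1 p.2) p (1, 0) := by
  set F : ℝ × ℝ → ℝ := fun p => u p.1 p.2 with hF
  have hd : ∀ p ∈ U, DifferentiableAt ℝ F p := fun p hp =>
    (hu.contDiffAt (hU.mem_nhds hp)).differentiableAt (by simp)
  have h1 : ∀ p ∈ U, pt u p.1 p.2 = fderiv ℝ F p (1, 0) := fun p hp =>
    (hasDerivAt_fst_slice (hd p hp)).deriv
  have h2 : ∀ p ∈ U, px u p.1 p.2 = fderiv ℝ F p (0, 1) := fun p hp =>
    (hasDerivAt_snd_slice (hd p hp)).deriv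
  have hF' : ContDiffOn ℝ 1 (fderiv ℝ F) U := hu.fderiv_of_isOpen hU (by norm_num)
  refine ⟨(hF'.clm_apply contDiffOn_const).congr h1, (hF'.clm_apply contDiffOn_const).congr h2,
    fun p hp => ?_⟩
  have e1 : (fun p : ℝ × ℝ => pt u p.1 p.2) =ᶠ[nhds p] fun p => fderiv ℝ F p (1, 0) :=
    Filter.eventuallyEq_of_mem (hU.mem_nhds hp) h1
  have e2 : (fun p : ℝ × ℝ => px u p.1 p.2) =ᶠ[nhds p] fun p => fderiv ℝ F p (0, 1) :=
    Filter.eventuallyEq_of_mem (hU.mem_nhds hp) h2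
  have hd' : DifferentiableAt ℝ (fderiv ℝ F) p :=
    (hF'.contDiffAt (hU.mem_nhds hp)).differentiableAt (by simp)
  have key : ∀ v w, fderiv ℝ (fun p => fderiv ℝ F p v) p w = fderiv ℝ (fderiv ℝ F) p w v := by
    intro v w
    rw [(hd'.hasFDerivAt.clm_apply (hasFDerivAt_const v p)).fderiv]
    simp
  rw [e1.fderiv_eq, e2.fderiv_eq, key, key]
  exact ((hu.contDiffAt (hU.mem_nhds hp)).isSymmSndFDerivAt (by simp)) _ _

/-- Corollary 3.3 of the paper. If the toughness `κ` is continuous,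
positive and not integrable on `[ℓ₀,∞)` (condition (K0)), then for every `T, M > 0` there
exists `L > 0` bounding `ℓ(T)` uniformly with respect to `ε ∈ (0,1/2)` for all pairs
`(u, ℓ)` as in the uniform energy bound. -/
theorem stmt10
    (l0 ν : ℝ) (hl0 : 0 < l0) (hν : 0 ≤ ν)
    (κ : ℝ → ℝ)
    (hκ_cont : ContinuousOn κ (Ici l0))
    (hκ_pos : ∀ x ≥ l0, 0 < κ x)
    (hK0 : ¬ IntegrableOn κ (Ici l0) volume) :
    ∀ T > (0:ℝ), ∀ M > (0:ℝ), ∃ L > (0:ℝ),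
      ∀ ε : ℝ, 0 < ε → ε < 1/2 →
      ∀ ℓ : ℝ → ℝ,
        (∃ K : NNReal, LipschitzOnWith K ℓ (Ici 0)) →
        MonotoneOn ℓ (Ici 0) → ℓ 0 = l0 → (∀ t ≥ (0:ℝ), l0 ≤ ℓ t) →
        (∀ᵐ t ∂volume, t ∈ Ioi (0:ℝ) → ∀ d, HasDerivAt ℓ d t → d < 1/ε) →
      ∀ u : ℝ → ℝ → ℝ,
        (∃ U : Set (ℝ × ℝ), IsOpen U ∧
          closure {p : ℝ × ℝ | 0 < p.1 ∧ 0 < p.2 ∧ p.2 < ℓ p.1} ⊆ U ∧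
          ContDiffOn ℝ 2 (fun p : ℝ × ℝ => u p.1 p.2) U) →
        (∀ t x : ℝ, 0 < t → 0 < x → x < ℓ t →
          ε ^ 2 * ptt u t x - pxx u t x + ν * ε * pt u t x = 0) →
        (∀ t ≥ (0:ℝ), u t (ℓ t) = 0) →
        (∀ t ≥ (0:ℝ), En ε ℓ u t + Afr ε ν ℓ u t + (∫ σ in l0..ℓ t, κ σ) + Wk u t
          = En ε ℓ u 0) →
        En ε ℓ u 0 ≤ M →
        (∫ τ in (0:ℝ)..T, (pt u τ 0) ^ 2) ≤ M →
        ℓ T ≤ L := by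
  intro T hT M hM
  set C := ν + 1 / l0 with hC
  have hC0 : 0 < C := by positivity
  obtain ⟨L, hL, hLb⟩ := exists_toughness hl0 hκ_cont hκ_pos hK0
    (4 * M + 2 * C * gronwallBound 0 (2 * C) (4 * M) T)
  refine ⟨L, hL, ?_⟩
  rintro ε hε hε2 ℓ - hmono - hge - u ⟨U, hU, hcl, hu⟩ hpde - hbal hE0 hw
  obtain ⟨ha, hb, hsym⟩ := partials hU hu
  have hmem : ∀ t x, 0 ≤ t → x ∈ Icc 0 (ℓ t) → (t, x) ∈ U := fun t x ht hx =>
    hcl (mem_closure_domain hl0 hmono hge ht hx)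
  have hmem0 : ∀ t x, 0 ≤ t → x ∈ Icc 0 l0 → (t, x) ∈ U := fun t x ht hx =>
    hmem t x ht ⟨hx.1, hx.2.trans (hge t ht)⟩
  have hG : ContinuousOn (fun p : ℝ × ℝ => ε ^ 2 * (pt u p.1 p.2) ^ 2 + (px u p.1 p.2) ^ 2) U := by
    have := ha.continuousOn
    have := hb.continuousOn
    fun_prop
  set e : ℝ → ℝ := fun t => (1 / 2) * ∫ y in (0:ℝ)..l0, (ε ^ 2 * (pt u t y) ^ 2 + (px u t y) ^ 2)
    with he
  have hpos : ∀ t y, 0 ≤ ε ^ 2 * (pt u t y) ^ 2 + (px u t y) ^ 2 := fun t y => by positivity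
  have he_nonneg : ∀ t, 0 ≤ e t := fun t =>
    mul_nonneg (by norm_num) (intervalIntegral.integral_nonneg hl0.le fun y _ => hpos t y)
  have heE : ∀ t ≥ (0:ℝ), e t ≤ En ε ℓ u t := by
    intro t ht
    refine mul_le_mul_of_nonneg_left ?_ (by norm_num)
    refine intervalIntegral.integral_mono_interval le_rfl hl0.le (hge t ht)
      (Filter.Eventually.of_forall fun y => hpos t y) ?_
    apply ContinuousOn.intervalIntegrable
    rw [uIcc_of_le (hl0.le.trans (hge t ht))]
    exact hG.comp (f := fun y : ℝ => (t, y)) (by fun_prop) fun y hy => hmem t y ht hy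
  have hec : ContinuousOn e (Icc 0 T) :=
    continuousOn_const.mul (slice_cont hT.le hl0.le
      (hG.mono fun p hp => hmem0 p.1 p.2 hp.1.1 hp.2))
  have hflux : ∀ t ∈ Icc 0 T, (1 / 2) * ∫ s in (0:ℝ)..t, (px u s 0) ^ 2 ≤
      C * (∫ s in (0:ℝ)..t, e s) + ε * e t + ε * e 0 := by
    intro t ht
    refine flux hl0 hν hε ht.1 hU ha hb (fun p hp => hmem0 p.1 p.2 hp.1.1 hp.2) hsym ?_
    intro s x hs hx hxl
    have hp : (s, x) ∈ U := hmem0 s x hs.le ⟨hx.le, hxl.le⟩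
    have h := hpde s x hs hx (hxl.trans_le (hge s hs.le))
    have h1 : ptt u s x = _ := (hasDerivAt_fst_slice
      ((ha.contDiffAt (hU.mem_nhds hp)).differentiableAt (by simp))).deriv
    have h2 : pxx u s x = _ := (hasDerivAt_snd_slice
      ((hb.contDiffAt (hU.mem_nhds hp)).differentiableAt (by simp))).deriv
    rw [h1, h2] at h
    exact h
  have hlt : ∀ {h : ℝ × ℝ → ℝ}, ContinuousOn h U → ∀ c d, 0 ≤ c → 0 ≤ d →
      IntervalIntegrable (fun s => h (s, 0)) volume c d := by
    intro h hh c d hc hd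
    apply ContinuousOn.intervalIntegrable
    exact hh.comp (by fun_prop) fun s hs => hmem0 s 0 ((le_inf hc hd).trans hs.1) ⟨le_rfl, hl0.le⟩
  have hbound : ∀ t ∈ Icc 0 T, En ε ℓ u t + (∫ σ in l0..ℓ t, κ σ) ≤
      2 * M + (1 / 2) * e t + C * ∫ s in (0:ℝ)..t, e s := by
    intro t ht
    have hA : 0 ≤ Afr ε ν ℓ u t := by
      refine mul_nonneg hν (intervalIntegral.integral_nonneg ht.1 fun s hs => ?_)
      exact intervalIntegral.integral_nonneg (hl0.le.trans (hge s hs.1)) fun y _ => by positivity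
    have i1 : IntervalIntegrable (fun s => (pt u s 0) ^ 2) volume 0 t :=
      hlt (ha.continuousOn.pow 2) 0 t le_rfl ht.1
    have i2 : IntervalIntegrable (fun s => (px u s 0) ^ 2) volume 0 t :=
      hlt (hb.continuousOn.pow 2) 0 t le_rfl ht.1
    have i3 : IntervalIntegrable (fun s => pt u s 0 * px u s 0) volume 0 t :=
      hlt (ha.continuousOn.mul hb.continuousOn) 0 t le_rfl ht.1
    have hW : -Wk u t ≤ (1 / 2) * (∫ s in (0:ℝ)..t, (pt u s 0) ^ 2)
        + (1 / 2) * ∫ s in (0:ℝ)..t, (px u s 0) ^ 2 := by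
      rw [Wk, ← intervalIntegral.integral_neg, ← intervalIntegral.integral_const_mul,
        ← intervalIntegral.integral_const_mul,
        ← intervalIntegral.integral_add (i1.const_mul _) (i2.const_mul _)]
      refine intervalIntegral.integral_mono_on ht.1 i3.neg
        ((i1.const_mul _).add (i2.const_mul _)) fun s _ => ?_
      nlinarith [sq_nonneg (pt u s 0 + px u s 0)]
    have hw' : (∫ s in (0:ℝ)..t, (pt u s 0) ^ 2) ≤ M :=
      (intervalIntegral.integral_mono_interval le_rfl ht.1 ht.2
        (Filter.Eventually.of_forall fun s => sq_nonneg _)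
        (hlt (ha.continuousOn.pow 2) 0 T le_rfl hT.le)).trans hw
    have h1 := hflux t ht
    -- The assumption `ε < 1/2` makes the term `ε e(t)` absorbable by `E(t)`.
    have h2 : ε * e t ≤ (1 / 2) * e t := mul_le_mul_of_nonneg_right hε2.le (he_nonneg t)
    have h3 : ε * e 0 ≤ (1 / 2) * e 0 := mul_le_mul_of_nonneg_right hε2.le (he_nonneg 0)
    have h4 := heE 0 le_rfl
    have h5 := hbal t ht.1
    linarith
  have hκ0 : ∀ t ≥ (0:ℝ), 0 ≤ ∫ σ in l0..ℓ t, κ σ := fun t ht =>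
    intervalIntegral.integral_nonneg (hge t ht) fun x hx => (hκ_pos x hx.1).le
  have hgron : ∀ t ∈ Icc 0 T, e t ≤ 4 * M + 2 * C * ∫ s in (0:ℝ)..t, e s := by
    intro t ht
    linarith [hbound t ht, heE t ht.1, hκ0 t ht.1]
  have hI := gronwall_int hT.le hec (fun t _ => he_nonneg t) hgron
  have hTm : T ∈ Icc 0 T := right_mem_Icc.2 hT.le
  refine hLb _ (hge T hT.le) ?_
  have h6 := mul_le_mul_of_nonneg_left hI hC0.le
  linarith [hbound T hTm, hgron T hTm, (he_nonneg T).trans (heE T hT.le)]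
end

section
/- Let ℓ̃ : [0,∞) → ℝ be nondecreasing and Lipschitz with finite limit ℓ₁ := lim_{t→∞} ℓ̃(t), and let m > 0. Then lim_{t→∞} e^{−mt}·∫₀ᵗ ℓ̃'(τ)·e^{mτ} dτ = 0, where ℓ̃' denotes the a.e. derivative of ℓ̃. -/
open MeasureTheory Set

/-!
The derivative of a monotone function with a finite limit is nonnegative and integrable on the
half-line `(0, ∞)`: its integral over `[0, t]` is at most the increment of the function. After
moving `exp (-(m * t))` under the integral sign, the integrand at a fixed `τ` is
`deriv ltil τ * exp (-(m * (t - τ)))` for `τ ≤ t` and zero otherwise. It is dominated by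
`deriv ltil` and tends to zero as `t → ∞`, so dominated convergence gives the claim.
-/

lemma deriv_nonneg_of_monotoneOn_Ici {f : ℝ → ℝ} (hmono : MonotoneOn f (Ici 0))
    {x : ℝ} (hx : 0 < x) : 0 ≤ deriv f x := by
  rw [← derivWithin_of_mem_nhds (Ici_mem_nhds hx)]
  exact hmono.derivWithin_nonneg

/-- Provides the dominating function: monotonicity gives `∫₀ⁿ f' ≤ f n - f 0 ≤ l - f 0` for
every `n`, a bound independent of `n`. -/
lemma integrableOn_deriv_of_monotoneOn_tendsto {f : ℝ → ℝ} {l : ℝ}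
    (hmono : MonotoneOn f (Ici 0)) (hlim : Filter.Tendsto f Filter.atTop (nhds l)) :
    IntegrableOn (deriv f) (Ioi 0) := by
  have hsub : ∀ n : ℕ, MonotoneOn f (uIcc (0 : ℝ) n) := fun n => by
    rw [uIcc_of_le n.cast_nonneg]
    exact hmono.mono Icc_subset_Ici_self
  refine integrableOn_Ioi_of_intervalIntegral_norm_bounded (l - f 0) 0
    (b := fun n : ℕ => (n : ℝ)) (l := Filter.atTop) (fun n => ?_)
    tendsto_natCast_atTop_atTop (Filter.Eventually.of_forall fun n => ?_)
  · exact (hsub n).intervalIntegrable_deriv.1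
  · have hn : (0 : ℝ) ≤ n := n.cast_nonneg
    have h0n : f 0 ≤ f n := hmono (mem_Ici.2 le_rfl) hn hn
    have hnl : f n ≤ l := ge_of_tendsto hlim <| by
      filter_upwards [Filter.eventually_ge_atTop (n : ℝ)] with t ht
      exact hmono hn (hn.trans ht) ht
    have hnorm : ∫ x in (0 : ℝ)..n, ‖deriv f x‖ = ∫ x in (0 : ℝ)..n, deriv f x := by
      refine intervalIntegral.integral_congr_ae (Filter.Eventually.of_forall fun x hx => ?_)
      rw [uIoc_of_le hn] at hx
      exact Real.norm_of_nonneg (deriv_nonneg_of_monotoneOn_Ici hmono hx.1)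
    have hint := (hsub n).intervalIntegral_deriv_mem_uIcc
    rw [uIcc_of_le (sub_nonneg.2 h0n)] at hint
    rw [hnorm]
    linarith [hint.2]

/-- key step in Proposition 4.10 of the paper. If `ℓ̃` is nondecreasing
and Lipschitz on `[0,∞)` with finite limit at `+∞`, and `m > 0`, then
`e^{−mt} ∫₀ᵗ ℓ̃'(τ) e^{mτ} dτ → 0` as `t → ∞`, where `ℓ̃'` is the a.e. derivative of `ℓ̃`
(here realised by `deriv ltil`, which coincides a.e. with the derivative of the Lipschitz
function `ℓ̃`). -/
theorem stmt16
    (ltil : ℝ → ℝ) (K : NNReal)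
    (hmono : MonotoneOn ltil (Ici 0))
    (hlip : LipschitzOnWith K ltil (Ici 0))
    (l1 m : ℝ) (hm : 0 < m)
    (hlim : Filter.Tendsto ltil Filter.atTop (nhds l1)) :
    Filter.Tendsto
      (fun t => Real.exp (-(m * t)) * ∫ τ in (0:ℝ)..t, deriv ltil τ * Real.exp (m * τ))
      Filter.atTop (nhds 0) := by
  -- The integrands are extended by zero to `(0, ∞)`, so that the domain does not depend on `t`.
  have key : Filter.Tendsto
      (fun t => ∫ τ in Ioi (0 : ℝ),
        (Iic t).indicator (fun τ => deriv ltil τ * Real.exp (-(m * (t - τ)))) τ)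
      Filter.atTop (nhds (∫ _ in Ioi (0 : ℝ), (0 : ℝ))) := by
    refine tendsto_integral_filter_of_dominated_convergence (deriv ltil)
      (Filter.Eventually.of_forall fun t => ?_) (Filter.Eventually.of_forall fun t => ?_)
      (integrableOn_deriv_of_monotoneOn_tendsto hmono hlim)
      (Filter.Eventually.of_forall fun τ => ?_)
    · refine (Measurable.indicator ?_ measurableSet_Iic).aestronglyMeasurable
      exact (measurable_deriv ltil).mul (by fun_prop)
    · filter_upwards [ae_restrict_mem measurableSet_Ioi] with τ hτ
      have hd := deriv_nonneg_of_monotoneOn_Ici hmono hτ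
      by_cases h : τ ∈ Iic t
      · rw [indicator_of_mem h, Real.norm_of_nonneg (by positivity)]
        refine mul_le_of_le_one_right hd (Real.exp_le_one_iff.2 ?_)
        exact neg_nonpos.2 (mul_nonneg hm.le (sub_nonneg.2 h))
      · rw [indicator_of_notMem h, norm_zero]
        exact hd
    · have hexp : Filter.Tendsto (fun t => Real.exp (-(m * (t - τ)))) Filter.atTop (nhds 0) :=
        Real.tendsto_exp_neg_atTop_nhds_zero.comp
          ((Filter.tendsto_atTop_add_const_right _ (-τ) Filter.tendsto_id).const_mul_atTop hm)
      have hmul := hexp.const_mul (deriv ltil τ)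
      rw [mul_zero] at hmul
      refine hmul.congr' ?_
      filter_upwards [Filter.eventually_ge_atTop τ] with t ht
      rw [indicator_of_mem (mem_Iic.2 ht)]
  rw [integral_zero] at key
  refine key.congr' ?_
  filter_upwards [Filter.eventually_ge_atTop 0] with t ht
  rw [setIntegral_indicator measurableSet_Iic, Ioi_inter_Iic,
    ← intervalIntegral.integral_of_le ht, ← intervalIntegral.integral_const_mul]
  congr 1
  funext τ
  rw [mul_left_comm, ← Real.exp_add]
  ring_nf
end
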